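/- Let M be a 1-manifold which has a basis of open sets each of which is Hausdorff and f-rim-simple. Then NH(p) is a discrete subset of M for every p ∈ M. -/

import Mathlib

open Set Topology TopologicalSpace

universe u

/-- Two points are inseparable (`x ⋈ y`): distinct, and every open set containing
one meets every open set containing the other. -/
def Bump {X : Type u} [TopologicalSpace X] (x y : X) : Prop :=
  x ≠ y ∧ ∀ U V : Set X, IsOpen U → IsOpen V → x ∈ U → y ∈ V → (U ∩ V).Nonempty

/-- `NH A` = points inseparable from some point of `A`. -/
def NH {X : Type u} [TopologicalSpace X] (A : Set X) : Set X :=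
  {y | ∃ x ∈ A, Bump y x}

/-- `NHpt x = NH {x}`. -/
def NHpt {X : Type u} [TopologicalSpace X] (x : X) : Set X := NH {x}

/-- An Euclidean subset: open and homeomorphic to ℝⁿ. -/
def IsEuclidean {X : Type u} [TopologicalSpace X] (n : ℕ) (U : Set X) : Prop :=
  IsOpen U ∧ Nonempty (U ≃ₜ EuclideanSpace ℝ (Fin n))

/-- An `n`-manifold: nonempty connected space, every point has an open
neighborhood homeomorphic to ℝⁿ (Hausdorffness NOT assumed). -/
def IsNManifold (X : Type u) [TopologicalSpace X] (n : ℕ) : Prop :=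
  ConnectedSpace X ∧ ∀ x : X, ∃ U : Set X, x ∈ U ∧ IsEuclidean n U

/-- Locally Hausdorff space. -/
def LocallyHausdorff (X : Type u) [TopologicalSpace X] : Prop :=
  ∀ x : X, ∃ U : Set X, IsOpen U ∧ x ∈ U ∧ T2Space U

/-- Quasi-countably-compact subset: every countable open cover has a finite subcover. -/
def QuasiCountablyCompact {X : Type u} [TopologicalSpace X] (K : Set X) : Prop :=
  ∀ U : ℕ → Set X, (∀ n, IsOpen (U n)) → K ⊆ ⋃ n, U n →
    ∃ s : Finset ℕ, K ⊆ ⋃ n ∈ s, U n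

/-- `A` is `κ`-Baire in `X`: not covered by fewer than `κ` nowhere dense sets. -/
def KappaBaire {X : Type u} [TopologicalSpace X] (κ : Cardinal.{u}) (A : Set X) : Prop :=
  ∀ (ι : Type u) (F : ι → Set X), Cardinal.mk ι < κ →
    (∀ i, IsNowhereDense (F i)) → ¬ A ⊆ ⋃ i, F i

/-- `S` is a scan of `A` in `X`. -/
def IsScan {X : Type u} [TopologicalSpace X] (S A : Set X) : Prop :=
  S ⊆ NH A ∧ ∀ x ∈ A, ((NHpt x).Nonempty ↔ (NHpt x ∩ S).Nonempty)

/-- `U` is sorted: a continuous map from `closure U` to a Hausdorff space,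
injective on `U`. -/
def IsSorted {X : Type u} [TopologicalSpace X] (U : Set X) : Prop :=
  ∃ (H : Type u) (tH : TopologicalSpace H) (f : closure U → H),
    @T2Space H tH ∧ @Continuous _ H _ tH f ∧
      ∀ a b : closure U, (a : X) ∈ U → (b : X) ∈ U → f a = f b → a = b

/-- `U` is weakly sorted: a continuous map from `closure U` to a Hausdorff space,
finite-to-one on `U`. -/
def IsWeaklySorted {X : Type u} [TopologicalSpace X] (U : Set X) : Prop :=
  ∃ (H : Type u) (tH : TopologicalSpace H) (f : closure U → H),
    @T2Space H tH ∧ @Continuous _ H _ tH f ∧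
      ∀ h : H, {a : closure U | (a : X) ∈ U ∧ f a = h}.Finite

/-- H-maximal: open Hausdorff, with no open Hausdorff proper superset. -/
def IsHMaximal {X : Type u} [TopologicalSpace X] (U : Set X) : Prop :=
  IsOpen U ∧ T2Space U ∧
    ∀ V : Set X, IsOpen V → T2Space V → U ⊆ V → V = U

/-- CH-maximal: connected open Hausdorff, with no connected open Hausdorff
proper superset. -/
def IsCHMaximal {X : Type u} [TopologicalSpace X] (U : Set X) : Prop :=
  IsConnected U ∧ IsOpen U ∧ T2Space U ∧
    ∀ V : Set X, IsConnected V → IsOpen V → T2Space V → U ⊆ V → V = U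

/-- `U` is f-simple at `p`: every open `V ∋ p` contains an open `W ∋ p` such that
`W ∩ U` has finitely many connected components. -/
def FSimpleAt {X : Type u} [TopologicalSpace X] (U : Set X) (p : X) : Prop :=
  ∀ V : Set X, IsOpen V → p ∈ V → ∃ W : Set X, IsOpen W ∧ p ∈ W ∧ W ⊆ V ∧
    {C : Set X | ∃ z ∈ W ∩ U, C = connectedComponentIn (W ∩ U) z}.Finite

/-- f-rim-simple: f-simple at every boundary point. -/
def FRimSimple {X : Type u} [TopologicalSpace X] (U : Set X) : Prop :=
  ∀ p ∈ closure U \ U, FSimpleAt U p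

/-- cov(ℳ): least cardinality of a family of nowhere dense subsets of ℝ covering ℝ. -/
noncomputable def covMeager : Cardinal :=
  sInf {c : Cardinal | ∃ (ι : Type) (F : ι → Set ℝ),
    Cardinal.mk ι = c ∧ (∀ i, IsNowhereDense (F i)) ∧ ⋃ i, F i = Set.univ}

/-- A locally compact first countable S-space: Hausdorff, regular, locally compact,
first countable, hereditarily separable, not Lindelöf. -/
def IsLCFCSSpace (S : Type) [TopologicalSpace S] : Prop :=
  T2Space S ∧ RegularSpace S ∧ LocallyCompactSpace S ∧
    FirstCountableTopology S ∧ (∀ A : Set S, SeparableSpace A) ∧ ¬ LindelofSpace S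

/-!
Let `q ⋈ p`, and choose a basic open `U ∋ q` inside a chart around `q`. Then `p` lies on the rim of
`U`, so `p` has a Hausdorff open neighbourhood `W` such that `W ∩ U` has finitely many components.
Every point of `NH(p) ∩ U` is in the closure of `W ∩ U` but not in `W`, hence on the rim of one of
these components. A component corresponds to an interval, whose rim consists of at most its two
end points, so `NH(p) ∩ U` is finite; as `M` is T₁, `q` is isolated in `NH(p)`.
-/

section Separation

variable {X : Type u} [TopologicalSpace X] {x y : X} {U : Set X}

theorem mem_NHpt_iff : y ∈ NHpt x ↔ Bump y x := by
  simp [NHpt, NH]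

theorem Bump.symm (h : Bump x y) : Bump y x :=
  ⟨h.1.symm, fun U V hU hV hy hx => inter_comm V U ▸ h.2 V U hV hU hx hy⟩

theorem Bump.mem_closure (h : Bump x y) (hU : IsOpen U) (hx : x ∈ U) : y ∈ closure U :=
  mem_closure_iff.2 fun V hV hy => inter_comm U V ▸ h.2 U V hU hV hx hy

theorem Bump.notMem_of_t2Space [T2Space U] (h : Bump x y) (hU : IsOpen U) (hx : x ∈ U) :
    y ∉ U := by
  intro hy
  have hne : (⟨x, hx⟩ : U) ≠ ⟨y, hy⟩ := fun heq => h.1 (congrArg Subtype.val heq)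
  obtain ⟨V, W, hV, hW, hxV, hyW, hVW⟩ := t2_separation hne
  have hmeet := h.2 _ _ (hU.isOpenMap_subtype_val V hV) (hU.isOpenMap_subtype_val W hW)
    (mem_image_of_mem _ hxV) (mem_image_of_mem _ hyW)
  rw [← image_inter Subtype.val_injective, hVW.inter_eq] at hmeet
  simp at hmeet

theorem LocallyHausdorff.t1Space (hX : LocallyHausdorff X) : T1Space X := by
  refine t1Space_iff_specializes_imp_eq.2 fun x y hxy => ?_
  obtain ⟨U, hU, hyU, hU2⟩ := hX y
  have hxU : x ∈ U := hxy.mem_open hU hyU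
  have hxy' : (⟨x, hxU⟩ : U) ⤳ ⟨y, hyU⟩ := IsInducing.subtypeVal.specializes_iff.1 hxy
  exact congrArg Subtype.val hxy'.eq

variable {Y : Type*} [TopologicalSpace Y] [T2Space Y]

theorem t2Space_of_continuousOn_injOn {g : X → Y} (hg : ContinuousOn g U)
    (hinj : InjOn g U) : T2Space U :=
  .of_injective_continuous (injOn_iff_injective.1 hinj) hg.domRestrict

theorem locallyHausdorff_of_forall_continuousOn_injOn
    (h : ∀ x : X, ∃ E ∈ 𝓝 x, ∃ g : X → Y, ContinuousOn g E ∧ InjOn g E) :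
    LocallyHausdorff X := by
  intro x
  obtain ⟨E, hE, g, hg, hinj⟩ := h x
  exact ⟨interior E, isOpen_interior, mem_interior_iff_mem_nhds.2 hE,
    t2Space_of_continuousOn_injOn (hg.mono interior_subset) (hinj.mono interior_subset)⟩

end Separation

theorem discreteTopology_of_forall_finite_inter {X : Type*} [TopologicalSpace X] [T1Space X]
    {S : Set X} (h : ∀ x ∈ S, ∃ U ∈ 𝓝 x, (S ∩ U).Finite) : DiscreteTopology S := by
  refine isDiscrete_iff_discreteTopology.1 (isDiscrete_iff_nhdsWithin.2 fun x hx => ?_)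
  obtain ⟨U, hU, hfin⟩ := h x hx
  calc 𝓝[S] x = 𝓝[S ∩ U] x := (nhdsWithin_inter_of_mem' (mem_nhdsWithin_of_mem_nhds hU)).symm
    _ = pure x := isDiscrete_iff_nhdsWithin.1 hfin.isDiscrete x ⟨hx, mem_of_mem_nhds hU⟩

theorem exists_mem_closure_connectedComponentIn {X : Type*} [TopologicalSpace X] {A : Set X}
    (hA : {C : Set X | ∃ z ∈ A, C = connectedComponentIn A z}.Finite) {x : X}
    (hx : x ∈ closure A) : ∃ z ∈ A, x ∈ closure (connectedComponentIn A z) := by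
  have hcover : A ⊆ ⋃ C ∈ {C : Set X | ∃ z ∈ A, C = connectedComponentIn A z}, C :=
    fun z hz => mem_biUnion ⟨z, hz, rfl⟩ (mem_connectedComponentIn hz)
  have hx' := closure_mono hcover hx
  rw [hA.closure_biUnion] at hx'
  obtain ⟨_, ⟨z, hz, rfl⟩, hxz⟩ := mem_iUnion₂.1 hx'
  exact ⟨z, hz, hxz⟩

section LinearOrder

variable {α : Type*} [LinearOrder α] [TopologicalSpace α] [OrderClosedTopology α]

theorem finite_closure_diff_of_ordConnected {S : Set α} (hS : S.OrdConnected) :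
    (closure S \ S).Finite := by
  have hLUB : {a | IsLUB S a}.Finite := Set.Subsingleton.finite fun _ ha _ hb => ha.unique hb
  have hGLB : {a | IsGLB S a}.Finite := Set.Subsingleton.finite fun _ ha _ hb => ha.unique hb
  refine (hLUB.union hGLB).subset ?_
  rintro y ⟨hy, hyS⟩
  by_cases hub : y ∈ upperBounds S
  · exact Or.inl ⟨hub, fun _ hu => closure_minimal hu isClosed_Iic hy⟩
  · obtain ⟨b, hb, hyb⟩ : ∃ b ∈ S, y < b := by simpa [upperBounds] using hub
    have hlb : y ∈ lowerBounds S := fun a ha =>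
      le_of_not_gt fun hay => hyS (hS.out ha hb ⟨hay.le, hyb.le⟩)
    exact Or.inr ⟨hlb, fun _ hl => closure_minimal hl isClosed_Ici hy⟩

variable {X : Type u} [TopologicalSpace X] {E U : Set X} {f : X → α}

theorem finite_inter_closure_diff_of_isPreconnected (hf : ContinuousOn f E) (hinj : InjOn f E)
    {C : Set X} (hCE : C ⊆ E) (hC : IsPreconnected C) : (E ∩ (closure C \ C)).Finite := by
  have himage : (closure (f '' C) \ f '' C).Finite :=
    finite_closure_diff_of_ordConnected (hC.image f (hf.mono hCE)).ordConnected
  refine Finite.of_finite_image (himage.subset ?_) (hinj.mono inter_subset_left)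
  rintro _ ⟨y, ⟨hyE, hyC, hyC'⟩, rfl⟩
  exact ⟨((hf y hyE).mono hCE).mem_closure_image hyC,
    fun hy => hyC' ((hinj.mem_image_iff hCE hyE).1 hy)⟩

theorem finite_inter_closure_diff_of_finite_components (hf : ContinuousOn f E) (hinj : InjOn f E)
    {A : Set X} (hAE : A ⊆ E)
    (hA : {C : Set X | ∃ z ∈ A, C = connectedComponentIn A z}.Finite) :
    (E ∩ (closure A \ A)).Finite := by
  have hunion : (⋃ C ∈ {C : Set X | ∃ z ∈ A, C = connectedComponentIn A z},
      E ∩ (closure C \ C)).Finite := by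
    refine hA.biUnion ?_
    rintro _ ⟨z, -, rfl⟩
    exact finite_inter_closure_diff_of_isPreconnected hf hinj
      ((connectedComponentIn_subset A z).trans hAE) isPreconnected_connectedComponentIn
  refine hunion.subset ?_
  rintro y ⟨hyE, hyA, hyA'⟩
  obtain ⟨z, hz, hyz⟩ := exists_mem_closure_connectedComponentIn hA hyA
  exact mem_biUnion ⟨z, hz, rfl⟩
    ⟨hyE, hyz, fun hy => hyA' (connectedComponentIn_subset A z hy)⟩

theorem FSimpleAt.finite_NHpt_inter {p : X} (hp : FSimpleAt U p) (hX : LocallyHausdorff X)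
    (hU : IsOpen U) (hf : ContinuousOn f U) (hinj : InjOn f U) : (NHpt p ∩ U).Finite := by
  obtain ⟨V, hV, hpV, _⟩ := hX p
  obtain ⟨W, hW, hpW, hWV, hfin⟩ := hp V hV hpV
  refine (finite_inter_closure_diff_of_finite_components hf hinj inter_subset_right hfin).subset ?_
  rintro y ⟨hy, hyU⟩
  have hpy : Bump p y := (mem_NHpt_iff.1 hy).symm
  have hyWU : y ∈ closure (W ∩ U) := by
    rw [inter_comm]
    exact hU.inter_closure ⟨hyU, hpy.mem_closure hW hpW⟩
  exact ⟨hyU, hyWU, fun hyW => hpy.notMem_of_t2Space hV hpV (hWV hyW.1)⟩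

theorem stmt10_general
    (hX : ∀ x : X, ∃ E ∈ 𝓝 x, ∃ f : X → α, ContinuousOn f E ∧ InjOn f E)
    {B : Set (Set X)} (hB : IsTopologicalBasis B) (hB2 : ∀ U ∈ B, FRimSimple U) (p : X) :
    DiscreteTopology (NHpt p) := by
  have hloc : LocallyHausdorff X := locallyHausdorff_of_forall_continuousOn_injOn hX
  have : T1Space X := hloc.t1Space
  refine discreteTopology_of_forall_finite_inter fun q hq => ?_
  obtain ⟨E, hE, f, hf, hinj⟩ := hX q
  obtain ⟨U, hUB, hqU, hUE⟩ := hB.mem_nhds_iff.1 hE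
  have hU : IsOpen U := hB.isOpen hUB
  have hfU : ContinuousOn f U := hf.mono hUE
  have hinjU : InjOn f U := hinj.mono hUE
  have : T2Space U := t2Space_of_continuousOn_injOn hfU hinjU
  have hqp : Bump q p := mem_NHpt_iff.1 hq
  have hp : p ∈ closure U \ U := ⟨hqp.mem_closure hU hqU, hqp.notMem_of_t2Space hU hqU⟩
  exact ⟨U, hU.mem_nhds hqU, (hB2 U hUB p hp).finite_NHpt_inter hloc hU hfU hinjU⟩

end LinearOrder

theorem IsEuclidean.exists_continuousOn_injOn_real {X : Type u} [TopologicalSpace X] {E : Set X}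
    (hE : IsEuclidean 1 E) : ∃ f : X → ℝ, ContinuousOn f E ∧ InjOn f E := by
  obtain ⟨-, ⟨e⟩⟩ := hE
  let g : E ≃ₜ ℝ := (e.trans (EuclideanSpace.equiv (Fin 1) ℝ).toHomeomorph).trans
    (Homeomorph.funUnique (Fin 1) ℝ)
  have hrestr : E.domRestrict (Function.extend Subtype.val g 0) = g :=
    Function.extend_comp Subtype.val_injective g 0
  refine ⟨Function.extend Subtype.val g 0, ?_, ?_⟩
  · rw [continuousOn_iff_continuous_domRestrict, hrestr]
    exact g.continuous
  · rw [injOn_iff_injective, hrestr]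
    exact g.injective

theorem IsNManifold.exists_nhds_continuousOn_injOn_real {X : Type u} [TopologicalSpace X]
    (hX : IsNManifold X 1) (x : X) :
    ∃ E ∈ 𝓝 x, ∃ f : X → ℝ, ContinuousOn f E ∧ InjOn f E := by
  obtain ⟨E, hxE, hE⟩ := hX.2 x
  exact ⟨E, hE.1.mem_nhds hxE, hE.exists_continuousOn_injOn_real⟩

/-- If a 1-manifold has a basis of open Hausdorff f-rim-simple sets,
then `NH(p)` is discrete for every `p`. -/
theorem stmt10 {M : Type u} [TopologicalSpace M] (hM : IsNManifold M 1)
    (B : Set (Set M)) (hB : TopologicalSpace.IsTopologicalBasis B)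
    (hB2 : ∀ U ∈ B, T2Space U ∧ FRimSimple U)
    (p : M) : DiscreteTopology (NHpt p) :=
  stmt10_general hM.exists_nhds_continuousOn_injOn_real hB (fun U hU => (hB2 U hU).2) p
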